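/- arXiv:1712.04013 — 6 statements merged into one kernel-verified Lean document; each statement's English description precedes it below -/
import Mathlib

section
/- Let X be a measurable space and Q a weighted evolution operator on X satisfying the minorization condition with constant ε ∈ (0,1) and probability measure η. Then there exists a unique probability measure μ∞ on X satisfying the fixed-point (stationarity) equation μ∞(Qφ) = μ∞(Q1)·μ∞(φ) for every bounded measurable function φ. Moreover, for every probability measure μ on X and every n ∈ ℕ, ‖Φ_n(μ) − μ∞‖_TV ≤ 2(1 − ε²)ⁿ; in particular the limit μ∞ does not depend on the initial measure μ. -/
open MeasureTheory ProbabilityTheory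

/-- The action of a weighted evolution operator given by a kernel `κ`:
`(Qφ)(q) = ∫ φ(q') κ(q, dq')`. -/
noncomputable def evolOp {X : Type*} [MeasurableSpace X] (κ : Kernel X X) (φ : X → ℝ) : X → ℝ :=
  fun q => ∫ q', φ q' ∂(κ q)

/-- Bounded measurable real-valued functions. -/
def BddMeas {X : Type*} [MeasurableSpace X] (φ : X → ℝ) : Prop :=
  Measurable φ ∧ ∃ C : ℝ, ∀ x, |φ x| ≤ C

/-- Minorization condition: `ε η(φ) ≤ (Qφ)(q) ≤ ε⁻¹ η(φ)` for all bounded measurable `φ ≥ 0`. -/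
def Minorizes {X : Type*} [MeasurableSpace X] (Q : (X → ℝ) → (X → ℝ)) (ε : ℝ)
    (η : Measure X) : Prop :=
  ∀ φ : X → ℝ, BddMeas φ → (∀ x, 0 ≤ φ x) → ∀ q,
    ε * ∫ x, φ x ∂η ≤ Q φ q ∧ Q φ q ≤ ε⁻¹ * ∫ x, φ x ∂η

/-- The discretized Feynman–Kac semigroup `Φ_n(μ)(φ) = μ(Qⁿφ)/μ(Qⁿ1)`. -/
noncomputable def FK {X : Type*} [MeasurableSpace X] (κ : Kernel X X) (μ : Measure X)
    (n : ℕ) (φ : X → ℝ) : ℝ :=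
  (∫ q, (evolOp κ)^[n] φ q ∂μ) / (∫ q, (evolOp κ)^[n] (fun _ => (1:ℝ)) q ∂μ)

/-- Fixed-point (stationarity) equation: `μ(Qφ) = μ(Q1)·μ(φ)` for all bounded measurable φ. -/
def FixedPt {X : Type*} [MeasurableSpace X] (κ : Kernel X X) (μ : Measure X) : Prop :=
  ∀ φ : X → ℝ, BddMeas φ →
    ∫ q, evolOp κ φ q ∂μ = (∫ q, evolOp κ (fun _ => (1:ℝ)) q ∂μ) * ∫ q, φ q ∂μ

open Filter Topology

section helpers
variable {X : Type*} [MeasurableSpace X]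

lemma BddMeas.integrable' {φ : X → ℝ} (h : BddMeas φ) (μ : Measure X) [IsFiniteMeasure μ] :
    Integrable φ μ := by
  obtain ⟨hm, C, hC⟩ := h
  exact Integrable.of_bound hm.aestronglyMeasurable C (ae_of_all _ hC)

lemma bddMeas_const (c : ℝ) : BddMeas (fun _ : X => c) := ⟨measurable_const, |c|, fun _ => le_rfl⟩

lemma bddMeas_ind {A : Set X} (hA : MeasurableSet A) : BddMeas (A.indicator fun _ => (1:ℝ)) := by
  refine ⟨measurable_const.indicator hA, 1, fun x => ?_⟩
  by_cases h : x ∈ A <;> simp [h]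

lemma BddMeas.lin {f g : X → ℝ} (hf : BddMeas f) (hg : BddMeas g) (a b : ℝ) :
    BddMeas (fun x => a * f x + b * g x) := by
  obtain ⟨hm, C, hC⟩ := hf
  obtain ⟨gm, D, hD⟩ := hg
  refine ⟨by fun_prop, |a| * C + |b| * D, fun x => ?_⟩
  calc |a * f x + b * g x| ≤ |a * f x| + |b * g x| := abs_add_le _ _
    _ = |a| * |f x| + |b| * |g x| := by rw [abs_mul, abs_mul]
    _ ≤ _ := by gcongr; exacts [hC x, hD x]

lemma integral_lin {f g : X → ℝ} (hf : BddMeas f) (hg : BddMeas g) (a b : ℝ) (μ : Measure X)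
    [IsFiniteMeasure μ] : ∫ x, a * f x + b * g x ∂μ = a * ∫ x, f x ∂μ + b * ∫ x, g x ∂μ := by
  rw [integral_add ((hf.integrable' μ).const_mul a) ((hg.integrable' μ).const_mul b),
    integral_const_mul, integral_const_mul]

lemma BddMeas.evol (κ : Kernel X X) [IsFiniteKernel κ] {φ : X → ℝ} (h : BddMeas φ) :
    BddMeas (evolOp κ φ) := by
  obtain ⟨hm, C, hC⟩ := h
  refine ⟨(hm.stronglyMeasurable.integral_kernel (κ := κ)).measurable, C * (κ.bound).toReal,
    fun q => ?_⟩
  have h1 := norm_integral_le_of_norm_le_const (μ := κ q) (f := φ) (C := C)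
    (ae_of_all _ fun x => hC x)
  have hC0 : 0 ≤ C := (abs_nonneg _).trans (hC q)
  refine h1.trans ?_
  gcongr
  exact ENNReal.toReal_mono (Kernel.bound_ne_top κ) (Kernel.measure_le_bound κ q _)

lemma BddMeas.evol_iter (κ : Kernel X X) [IsFiniteKernel κ] {φ : X → ℝ} (h : BddMeas φ) (n : ℕ) :
    BddMeas ((evolOp κ)^[n] φ) := by
  induction n with
  | zero => exact h
  | succ n ih => rw [Function.iterate_succ_apply']; exact ih.evol κ

lemma integral_bind_evol (κ : Kernel X X) [IsFiniteKernel κ] {φ : X → ℝ} (h : BddMeas φ)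
    (μ : Measure X) [IsFiniteMeasure μ] : ∫ x, φ x ∂(μ.bind κ) = ∫ x, evolOp κ φ x ∂μ := by
  have := h.integrable' (μ.bind κ)
  rw [Measure.comp_eq_comp_const_apply] at this ⊢
  rw [Kernel.integral_comp this]
  simp [evolOp]

/-- normalized one step map -/
noncomputable def stepT (κ : Kernel X X) (μ : Measure X) : Measure X :=
  (μ.bind κ Set.univ)⁻¹ • (μ.bind κ)

variable (κ : Kernel X X) [IsFiniteKernel κ] {ε : ℝ} (hε : ε ∈ Set.Ioo (0:ℝ) 1) {η : Measure X}
  [IsProbabilityMeasure η] (hmin : Minorizes (evolOp κ) ε η)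
include hε hmin

lemma integral_evol_bounds {φ : X → ℝ} (h : BddMeas φ) (h0 : ∀ x, 0 ≤ φ x) (μ : Measure X)
    [IsProbabilityMeasure μ] : ε * ∫ x, φ x ∂η ≤ ∫ x, evolOp κ φ x ∂μ ∧
      ∫ x, evolOp κ φ x ∂μ ≤ ε⁻¹ * ∫ x, φ x ∂η := by
  have hi := (h.evol κ).integrable' μ
  constructor
  · have := integral_mono (integrable_const (μ := μ) (ε * ∫ x, φ x ∂η)) hi
      (fun q => (hmin φ h h0 q).1)
    simpa using this
  · have := integral_mono hi (integrable_const (μ := μ) (ε⁻¹ * ∫ x, φ x ∂η))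
      (fun q => (hmin φ h h0 q).2)
    simpa using this

lemma integral_Q1_ge (μ : Measure X) [IsProbabilityMeasure μ] :
    ε ≤ ∫ x, evolOp κ (fun _ => (1:ℝ)) x ∂μ := by
  have := (integral_evol_bounds κ hε hmin (bddMeas_const 1) (fun _ => zero_le_one) μ).1
  simpa using this

lemma bind_univ (μ : Measure X) [IsProbabilityMeasure μ] :
    (μ.bind κ Set.univ).toReal = ∫ x, evolOp κ (fun _ => (1:ℝ)) x ∂μ := by
  rw [← integral_bind_evol κ (bddMeas_const 1)]
  simp [Measure.real]

lemma stepT_prob (μ : Measure X) [IsProbabilityMeasure μ] : IsProbabilityMeasure (stepT κ μ) := by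
  have h := bind_univ κ hε hmin μ
  have h2 := integral_Q1_ge κ hε hmin μ
  have h3 : μ.bind κ Set.univ ≠ 0 := by
    intro h0
    rw [h0] at h
    have := hε.1
    simp at h
    linarith
  refine ⟨?_⟩
  simp only [stepT, Measure.smul_apply, smul_eq_mul]
  exact ENNReal.inv_mul_cancel h3 (measure_ne_top _ _)

lemma stepT_iter_prob (μ : Measure X) [IsProbabilityMeasure μ] (n : ℕ) :
    IsProbabilityMeasure ((stepT κ)^[n] μ) := by
  induction n with
  | zero => simpa
  | succ n ih => rw [Function.iterate_succ_apply']; exact stepT_prob κ hε hmin _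

lemma integral_stepT {φ : X → ℝ} (h : BddMeas φ) (μ : Measure X) [IsProbabilityMeasure μ] :
    ∫ x, φ x ∂(stepT κ μ) =
      (∫ x, evolOp κ φ x ∂μ) / ∫ x, evolOp κ (fun _ => (1:ℝ)) x ∂μ := by
  rw [stepT, integral_smul_measure, integral_bind_evol κ h, ENNReal.toReal_inv,
    bind_univ κ hε hmin, smul_eq_mul, div_eq_inv_mul]

lemma FK_eq {φ : X → ℝ} (h : BddMeas φ) (n : ℕ) : ∀ (μ : Measure X) [IsProbabilityMeasure μ],
    FK κ μ n φ = ∫ x, φ x ∂((stepT κ)^[n] μ) := by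
  induction n with
  | zero => intro μ _; simp [FK]
  | succ n ih =>
    intro μ _
    have := stepT_prob κ hε hmin μ
    rw [Function.iterate_succ_apply, ← ih (stepT κ μ)]
    simp only [FK]
    have hp : (∫ x, evolOp κ (fun _ => (1:ℝ)) x ∂μ) ≠ 0 :=
      ((hε.1).trans_le (integral_Q1_ge κ hε hmin μ)).ne'
    rw [integral_stepT κ hε hmin (h.evol_iter κ n),
      integral_stepT κ hε hmin ((bddMeas_const 1).evol_iter κ n),
      div_div_div_cancel_right₀ hp, Function.iterate_succ_apply', Function.iterate_succ_apply']

lemma h_pos (n : ℕ) : ∃ c : ℝ, 0 < c ∧ ∀ q, c ≤ (evolOp κ)^[n] (fun _ => (1:ℝ)) q := by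
  induction n with
  | zero => exact ⟨1, one_pos, fun _ => le_rfl⟩
  | succ n ih =>
    obtain ⟨c, hc, h⟩ := ih
    refine ⟨ε * c, mul_pos hε.1 hc, fun q => ?_⟩
    have hb := (bddMeas_const (X := X) 1).evol_iter κ n
    rw [Function.iterate_succ_apply']
    refine le_trans ?_ (hmin _ hb (fun x => hc.le.trans (h x)) q).1
    have := integral_mono (integrable_const (μ := η) c) (hb.integrable' η) h
    simp only [integral_const, probReal_univ, one_smul] at this
    exact mul_le_mul_of_nonneg_left this hε.1.le

lemma osc {φ : X → ℝ} (hφ : BddMeas φ) (h0 : ∀ x, 0 ≤ φ x) (h1 : ∀ x, φ x ≤ 1) (n : ℕ) :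
    ∃ a b : ℝ, b - a ≤ (1 - ε ^ 2) ^ n ∧ ∀ q,
      a * (evolOp κ)^[n] (fun _ => (1:ℝ)) q ≤ (evolOp κ)^[n] φ q ∧
      (evolOp κ)^[n] φ q ≤ b * (evolOp κ)^[n] (fun _ => (1:ℝ)) q := by
  induction n with
  | zero => exact ⟨0, 1, by simp, fun q => by simp [h0 q, h1 q]⟩
  | succ n ih =>
    obtain ⟨a, b, hab, H⟩ := ih
    obtain ⟨c, hc, hcq⟩ := h_pos κ hε hmin n
    simp only [Function.iterate_succ_apply']
    have hg := hφ.evol_iter κ n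
    have hh := (bddMeas_const (X := X) 1).evol_iter κ n
    generalize (evolOp κ)^[n] φ = g at *
    generalize (evolOp κ)^[n] (fun _ => (1:ℝ)) = h at *
    have hηh : 0 < ∫ x, h x ∂η := by
      have := integral_mono (integrable_const (μ := η) c) (hh.integrable' η) hcq
      simp only [integral_const, probReal_univ, one_smul] at this
      exact hc.trans_le this
    set G := ∫ x, g x ∂η with hG
    set K := ∫ x, h x ∂η with hK
    have hε0 := hε.1
    have e2 : ε ^ 2 ≤ 1 := pow_le_one₀ hε.1.le hε.2.le
    have i1 : 0 ≤ 1 * G + (-a) * K := by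
      rw [hG, hK, ← integral_lin hg hh]
      exact integral_nonneg fun x => by have := (H x).1; simp only [Pi.zero_apply]; linarith
    have i2 : 0 ≤ (-1) * G + b * K := by
      rw [hG, hK, ← integral_lin hg hh]
      exact integral_nonneg fun x => by have := (H x).2; simp only [Pi.zero_apply]; linarith
    refine ⟨a + ε ^ 2 * (G / K - a), b - ε ^ 2 * (b - G / K), ?_, fun q => ?_⟩
    · have := mul_le_mul_of_nonneg_right hab (sub_nonneg.2 e2)
      rw [pow_succ (1 - ε ^ 2) n]
      refine le_trans (le_of_eq ?_) this
      ring
    · have u1 := (hmin (fun x => 1 * g x + (-a) * h x) (hg.lin hh _ _)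
        (fun x => by have := (H x).1; linarith) q).1
      have u2 := (hmin (fun x => (-1) * g x + b * h x) (hg.lin hh _ _)
        (fun x => by have := (H x).2; linarith) q).1
      have u3 := (hmin h hh (fun x => hc.le.trans (hcq x)) q).2
      simp only [evolOp] at u1 u2 u3 ⊢
      rw [integral_lin hg hh, integral_lin hg hh] at u1 u2
      rw [← hK] at u1 u2 u3
      rw [← hG] at u1 u2
      generalize (∫ x, g x ∂(κ q)) = Qg at *
      generalize (∫ x, h x ∂(κ q)) = Qh at *
      have u4 : ε ^ 2 * Qh / K ≤ ε := by
        rw [div_le_iff₀ hηh]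
        calc ε ^ 2 * Qh ≤ ε ^ 2 * (ε⁻¹ * K) := by gcongr
          _ = ε * K := by field_simp
      constructor
      · have : ε ^ 2 * (G / K - a) * Qh = (ε ^ 2 * Qh / K) * (1 * G + (-a) * K) := by
          field_simp; ring
        nlinarith [mul_le_mul_of_nonneg_right u4 i1]
      · have : ε ^ 2 * (b - G / K) * Qh = (ε ^ 2 * Qh / K) * ((-1) * G + b * K) := by
          field_simp; ring
        nlinarith [mul_le_mul_of_nonneg_right u4 i2]

lemma contr {A : Set X} (hA : MeasurableSet A) (n : ℕ) (μ ν : Measure X) [IsProbabilityMeasure μ]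
    [IsProbabilityMeasure ν] :
    |((stepT κ)^[n] μ).real A - ((stepT κ)^[n] ν).real A| ≤ (1 - ε ^ 2) ^ n := by
  have hb := bddMeas_ind hA
  obtain ⟨a, b, hab, H⟩ := osc κ hε hmin hb
    (fun x => Set.indicator_nonneg (fun _ _ => zero_le_one) x)
    (fun x => Set.indicator_le' (fun _ _ => le_rfl) (fun _ _ => zero_le_one) x) n
  have key : ∀ (μ : Measure X) [IsProbabilityMeasure μ],
      a ≤ ((stepT κ)^[n] μ).real A ∧ ((stepT κ)^[n] μ).real A ≤ b := by
    intro μ _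
    obtain ⟨c, hc, hcq⟩ := h_pos κ hε hmin n
    have e : ((stepT κ)^[n] μ).real A = FK κ μ n (A.indicator fun _ => (1:ℝ)) := by
      rw [FK_eq κ hε hmin hb, integral_indicator hA]
      simp
    have hh := (bddMeas_const (X := X) 1).evol_iter κ n
    have hpos : 0 < ∫ q, (evolOp κ)^[n] (fun _ => (1:ℝ)) q ∂μ := by
      have := integral_mono (integrable_const (μ := μ) c) (hh.integrable' μ) hcq
      simp only [integral_const, probReal_univ, one_smul] at this
      exact hc.trans_le this
    rw [e, FK, le_div_iff₀ hpos, div_le_iff₀ hpos, ← integral_const_mul, ← integral_const_mul]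
    have hg := (hb.evol_iter κ n).integrable' μ
    exact ⟨integral_mono ((hh.integrable' μ).const_mul a) hg fun q => (H q).1,
      integral_mono hg ((hh.integrable' μ).const_mul b) fun q => (H q).2⟩
  have k1 := key μ
  have k2 := key ν
  rw [abs_le]
  constructor <;> linarith

lemma stepT_dom {A : Set X} (hA : MeasurableSet A) (μ : Measure X) [IsProbabilityMeasure μ] :
    (stepT κ μ).real A ≤ ε⁻¹ * η.real A / ε := by
  have hb := bddMeas_ind hA
  have e := integral_stepT κ hε hmin hb μ
  have e1 : ∀ ρ : Measure X, ∫ x, (A.indicator fun _ => (1:ℝ)) x ∂ρ = ρ.real A := fun ρ => by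
    rw [integral_indicator hA]; simp
  rw [e1] at e
  rw [e, ← e1 η]
  have := (integral_evol_bounds κ hε hmin hb
    (fun x => Set.indicator_nonneg (fun _ _ => zero_le_one) x) μ)
  have h1 := integral_Q1_ge κ hε hmin μ
  have h2 : 0 ≤ ε⁻¹ * ∫ x, (A.indicator fun _ => (1:ℝ)) x ∂η := by
    rw [e1]; exact mul_nonneg (inv_nonneg.2 hε.1.le) measureReal_nonneg
  exact div_le_div₀ h2 this.2 hε.1 h1

omit hε hmin [IsFiniteKernel κ] in
/-- setwise limit of dominated probability measures -/
lemma exists_limit (ν : ℕ → Measure X) [∀ n, IsProbabilityMeasure (ν n)] (C : ℝ)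
    (hdom : ∀ n A, MeasurableSet A → (ν n).real A ≤ C * η.real A)
    (hlim : ∀ A, MeasurableSet A → ∃ l, Tendsto (fun n => (ν n).real A) atTop (𝓝 l)) :
    ∃ μ : Measure X, IsProbabilityMeasure μ ∧
      ∀ A, MeasurableSet A → Tendsto (fun n => (ν n).real A) atTop (𝓝 (μ.real A)) := by
  choose L hL using hlim
  have L0 : ∀ A hA, 0 ≤ L A hA := fun A hA => ge_of_tendsto' (hL A hA) fun _ => measureReal_nonneg
  have Le : ∀ A (hA : MeasurableSet A) c, (∀ n, (ν n).real A = c) → L A hA = c := fun A hA c h =>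
    tendsto_nhds_unique (hL A hA) (by simp only [h]; exact tendsto_const_nhds)
  let μ : Measure X := Measure.ofMeasurable (fun A hA => ENNReal.ofReal (L A hA))
    (by rw [Le _ _ 0 (by simp)]; simp) (by
      intro f hf hd
      have su : ∀ (ρ : Measure X) [IsProbabilityMeasure ρ],
          Summable (fun i => ρ.real (f i)) ∧ ρ.real (⋃ i, f i) = ∑' i, ρ.real (f i) := by
        intro ρ _
        have hU := measure_iUnion (μ := ρ) hd hf
        constructor
        · exact ENNReal.summable_toReal (by rw [← hU]; exact measure_ne_top _ _)
        · simp only [Measure.real]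
          rw [hU, ENNReal.tsum_toReal_eq fun _ => measure_ne_top _ _]
      have hs : Summable (fun i => C * η.real (f i)) := (su η).1.mul_left C
      have T := tendsto_tsum_of_dominated_convergence (𝓕 := atTop)
        (f := fun n i => (ν n).real (f i)) (g := fun i => L (f i) (hf i)) hs
        (fun i => hL _ _) (Eventually.of_forall fun n i => by
          rw [Real.norm_of_nonneg measureReal_nonneg]; exact hdom n _ (hf i))
      have hsL : Summable (fun i => L (f i) (hf i)) :=
        Summable.of_nonneg_of_le (fun i => L0 _ _)
          (fun i => le_of_tendsto' (hL _ _) fun n => hdom n _ (hf i)) hs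
      rw [← ENNReal.ofReal_tsum_of_nonneg (fun i => L0 _ _) hsL]
      congr 1
      refine tendsto_nhds_unique (hL _ (MeasurableSet.iUnion hf)) ?_
      refine T.congr fun n => ?_
      exact ((su (ν n)).2).symm)
  have hμ : ∀ A hA, μ A = ENNReal.ofReal (L A hA) := fun A hA => Measure.ofMeasurable_apply A hA
  refine ⟨μ, ⟨?_⟩, fun A hA => ?_⟩
  · rw [hμ _ MeasurableSet.univ, Le _ _ 1 (by simp)]; simp
  · rw [Measure.real, hμ A hA, ENNReal.toReal_ofReal (L0 A hA)]; exact hL A hA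

omit hε hmin [IsFiniteKernel κ] κ [IsProbabilityMeasure η] in
lemma tendsto_integral_of_setwise (ν : ℕ → Measure X) [∀ n, IsProbabilityMeasure (ν n)]
    (μ : Measure X) [IsProbabilityMeasure μ]
    (h : ∀ A, MeasurableSet A → Tendsto (fun n => (ν n).real A) atTop (𝓝 (μ.real A)))
    {φ : X → ℝ} (hφ : BddMeas φ) :
    Tendsto (fun n => ∫ x, φ x ∂(ν n)) atTop (𝓝 (∫ x, φ x ∂μ)) := by
  obtain ⟨hm, C, hC⟩ := id hφ
  let f : X → ℝ := fun x => 1 * φ x + C * 1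
  have hf : BddMeas f := hφ.lin (bddMeas_const 1) 1 C
  have e : ∀ (ρ : Measure X) [IsProbabilityMeasure ρ],
      ∫ x, φ x ∂ρ = (∫ t in Set.Ioc 0 (2 * C), ρ.real {a | t ≤ f a}) - C := by
    intro ρ _
    rw [← Integrable.integral_eq_integral_Ioc_meas_le (hf.integrable' ρ)
      (ae_of_all _ fun x => by have := abs_le.1 (hC x); simp only [f, Pi.zero_apply]; linarith)
      (ae_of_all _ fun x => by have := abs_le.1 (hC x); simp only [f]; linarith)]
    simp only [f]
    rw [integral_lin hφ (bddMeas_const 1)]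
    simp
  rw [e μ]
  simp only [e]
  refine Tendsto.sub_const ?_ C
  refine tendsto_integral_of_dominated_convergence (fun _ => (1:ℝ)) (fun n => ?_)
    (integrable_const _) (fun n => ae_of_all _ fun t => ?_) (ae_of_all _ fun t => ?_)
  · have : Antitone (fun t : ℝ => (ν n).real {a | t ≤ f a}) := fun s t hst =>
      measureReal_mono fun a ha => hst.trans ha
    exact this.measurable.aestronglyMeasurable
  · rw [Real.norm_of_nonneg measureReal_nonneg]; exact measureReal_le_one
  · exact h _ (measurableSet_le measurable_const hf.1)

end helpers

/-- Ergodicity of the discretized Feynman–Kac semigroup: under minorization there is a unique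
invariant probability measure, and any initial probability measure converges to it in total
variation at rate `2(1-ε²)ⁿ`. -/
theorem feynman_kac_unique_invariant_measure_and_convergence
    {X : Type*} [MeasurableSpace X] (κ : Kernel X X) [IsFiniteKernel κ]
    (ε : ℝ) (hε : ε ∈ Set.Ioo (0:ℝ) 1) (η : Measure X) [IsProbabilityMeasure η]
    (hmin : Minorizes (evolOp κ) ε η) :
    ∃ μinf : Measure X, IsProbabilityMeasure μinf ∧ FixedPt κ μinf ∧
      (∀ μ' : Measure X, IsProbabilityMeasure μ' → FixedPt κ μ' → μ' = μinf) ∧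
      (∀ μ : Measure X, IsProbabilityMeasure μ → ∀ n : ℕ, ∀ A : Set X, MeasurableSet A →
        |FK κ μ n (A.indicator fun _ => (1:ℝ)) - (μinf A).toReal| ≤ 2 * (1 - ε ^ 2) ^ n) := by
  have hε0 := hε.1
  have e2 : ε ^ 2 ≤ 1 := pow_le_one₀ hε.1.le hε.2.le
  have hr0 : Tendsto (fun n : ℕ => (1 - ε ^ 2) ^ n) atTop (𝓝 0) :=
    tendsto_pow_atTop_nhds_zero_of_lt_one (by linarith) (by nlinarith)
  let ν : ℕ → Measure X := fun n => (stepT κ)^[n] (stepT κ η)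
  have hη1 := stepT_prob κ hε hmin η
  have hν : ∀ n, IsProbabilityMeasure (ν n) := fun n => stepT_iter_prob κ hε hmin _ n
  have hν1 : ∀ n, ν (n + 1) = stepT κ (ν n) := fun n => Function.iterate_succ_apply' _ _ _
  have hνk : ∀ n k, ν (n + k) = (stepT κ)^[n] (ν k) := fun n k => Function.iterate_add_apply _ _ _ _
  obtain ⟨μ, hμ, hlim⟩ := exists_limit (η := η) ν (ε⁻¹ / ε) (by
    intro n A hA
    have := stepT_iter_prob κ hε hmin η n
    have h := stepT_dom κ hε hmin hA ((stepT κ)^[n] η)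
    rw [← Function.iterate_succ_apply' (stepT κ) n η] at h
    rw [div_mul_eq_mul_div]
    exact h) (by
    intro A hA
    apply cauchySeq_tendsto_of_complete
    refine cauchySeq_of_le_tendsto_0' _ (fun n m hnm => ?_) hr0
    obtain ⟨k, rfl⟩ := Nat.exists_eq_add_of_le hnm
    rw [Real.dist_eq, hνk]
    exact contr κ hε hmin hA n (stepT κ η) (ν k))
  have conv : ∀ (ρ : Measure X) [IsProbabilityMeasure ρ] (n : ℕ) (A : Set X), MeasurableSet A →
      |((stepT κ)^[n] ρ).real A - μ.real A| ≤ (1 - ε ^ 2) ^ n := by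
    intro ρ _ n A hA
    have h1 : Tendsto (fun k => (ν (n + k)).real A) atTop (𝓝 (μ.real A)) := by
      have := (tendsto_add_atTop_iff_nat n).2 (hlim A hA)
      simpa only [add_comm] using this
    refine le_of_tendsto' ((tendsto_const_nhds.sub h1).abs) fun k => ?_
    rw [hνk]
    exact contr κ hε hmin hA n ρ (ν k)
  refine ⟨μ, hμ, ?_, ?_, ?_⟩
  · intro φ hφ
    have t := fun {f : X → ℝ} (hf : BddMeas f) => tendsto_integral_of_setwise ν μ hlim hf
    have t1 := (t ((bddMeas_const 1).evol κ)).mul ((tendsto_add_atTop_iff_nat 1).2 (t hφ))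
    refine tendsto_nhds_unique (t (hφ.evol κ)) (t1.congr fun n => ?_)
    rw [hν1, integral_stepT κ hε hmin hφ]
    have := integral_Q1_ge κ hε hmin (ν n)
    exact mul_div_cancel₀ _ (by linarith)
  · intro μ' hμ' hfix
    have hT : stepT κ μ' = μ' := by
      have := stepT_prob κ hε hmin μ'
      ext A hA
      refine (measureReal_eq_measureReal_iff).1 ?_
      have hb := bddMeas_ind hA
      have e := integral_stepT κ hε hmin hb μ'
      have hQ := integral_Q1_ge κ hε hmin μ'
      rw [hfix _ hb, mul_div_cancel_left₀ _ (by linarith)] at e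
      simpa [integral_indicator hA] using e
    ext A hA
    have h : ∀ n, |μ'.real A - μ.real A| ≤ (1 - ε ^ 2) ^ n := fun n => by
      have := conv μ' n A hA
      rwa [Function.iterate_fixed hT] at this
    have h0 := ge_of_tendsto' hr0 h
    have h1 : μ'.real A = μ.real A := by
      have := abs_nonpos_iff.1 h0
      linarith
    exact (measureReal_eq_measureReal_iff).1 h1
  · intro ρ _ n A hA
    have h := conv ρ n A hA
    rw [FK_eq κ hε hmin (bddMeas_ind hA), integral_indicator hA]
    have hp : 0 ≤ (1 - ε ^ 2) ^ n := pow_nonneg (by linarith) n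
    simp only [integral_const, smul_eq_mul, mul_one, measureReal_restrict_apply_univ]
    exact h.trans (by linarith)
end

section
/- Let X be a measurable space and Q a weighted evolution operator on X satisfying the minorization condition with constant ε ∈ (0,1) and probability measure η. Let g : X → ℝ be bounded measurable with g ≥ 0 and η(g) > 0 (so that Qg ≥ ε η(g) > 0 pointwise), and define the Markov transition kernel S by S(q, A) = Q(g·1_A)(q) / (Qg)(q) for q ∈ X and measurable A ⊂ X. Then the Dobrushin ergodic coefficient of S satisfies α(S) ≥ ε². -/
open MeasureTheory ProbabilityTheory

/-- Lower bound on the Dobrushin ergodic coefficient of the resampled Markov kernel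
`S(q,A) = Q(g·1_A)(q)/(Qg)(q)`: for every pair of points and every finite measurable
partition, the Dobrushin sum is at least `ε²`; that is, `α(S) ≥ ε²`. -/
theorem dobrushin_coefficient_lower_bound
    {X : Type*} [MeasurableSpace X] (κ : Kernel X X) [IsFiniteKernel κ]
    (ε : ℝ) (hε : ε ∈ Set.Ioo (0:ℝ) 1) (η : Measure X) [IsProbabilityMeasure η]
    (hmin : Minorizes (evolOp κ) ε η)
    (g : X → ℝ) (hg : BddMeas g) (hg0 : ∀ x, 0 ≤ g x) (hgη : 0 < ∫ x, g x ∂η)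
    (q q' : X) (m : ℕ) (A : Fin m → Set X) (hAmeas : ∀ i, MeasurableSet (A i))
    (hAdisj : Pairwise (Function.onFun Disjoint A)) (hAcover : (⋃ i, A i) = Set.univ) :
    ε ^ 2 ≤ ∑ i : Fin m,
      min (evolOp κ ((A i).indicator g) q / evolOp κ g q)
          (evolOp κ ((A i).indicator g) q' / evolOp κ g q') := by
  obtain ⟨h0, h1⟩ := hε
  obtain ⟨hgm, C, hC⟩ := hg
  have hgi : Integrable g η := Integrable.of_bound hgm.aestronglyMeasurable C
    (Filter.Eventually.of_forall (fun x => by simpa using hC x))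
  have hsum : ∑ i, ∫ x, (A i).indicator g x ∂η = ∫ x, g x ∂η := by
    simp_rw [fun i => integral_indicator (μ := η) (f := g) (hAmeas i)]
    rw [← integral_iUnion_fintype hAmeas hAdisj (fun i => hgi.integrableOn), hAcover,
      setIntegral_univ]
  have hbi : ∀ i, BddMeas ((A i).indicator g) := fun i =>
    ⟨hgm.indicator (hAmeas i), C, fun x => by
      by_cases hx : x ∈ A i
      · simpa [hx] using hC x
      · simpa [hx] using (abs_nonneg _).trans (hC x)⟩
  have hi0 : ∀ i x, 0 ≤ (A i).indicator g x := fun i x =>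
    Set.indicator_nonneg (fun y _ => hg0 y) x
  have key : ∀ i p, ε ^ 2 * (∫ x, (A i).indicator g x ∂η) / (∫ x, g x ∂η) ≤
      evolOp κ ((A i).indicator g) p / evolOp κ g p := by
    intro i p
    have hl := (hmin _ (hbi i) (hi0 i) p).1
    obtain ⟨hg1, hg2⟩ := hmin g ⟨hgm, C, hC⟩ hg0 p
    have hI : 0 ≤ ∫ x, (A i).indicator g x ∂η := integral_nonneg (hi0 i)
    have hpos : 0 < evolOp κ g p := lt_of_lt_of_le (mul_pos h0 hgη) hg1
    have hg3 : ε * evolOp κ g p ≤ ∫ x, g x ∂η := by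
      calc _ ≤ ε * (ε⁻¹ * ∫ x, g x ∂η) := mul_le_mul_of_nonneg_left hg2 h0.le
        _ = _ := by field_simp
    rw [div_le_div_iff₀ hgη hpos]
    calc _ = (ε * ∫ x, (A i).indicator g x ∂η) * (ε * evolOp κ g p) := by ring
      _ ≤ _ := mul_le_mul hl hg3 (by positivity) ((mul_nonneg h0.le hI).trans hl)
  calc ε ^ 2 = ∑ i, ε ^ 2 * (∫ x, (A i).indicator g x ∂η) / (∫ x, g x ∂η) := by
        rw [← Finset.sum_div, ← Finset.mul_sum, hsum]
        field_simp
    _ ≤ _ := Finset.sum_le_sum fun i _ => le_min (key i q) (key i q')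
end

section
/- Let X be a measurable space and Q a weighted evolution operator on X satisfying the minorization condition with constant ε ∈ (0,1) and probability measure η. Define g_n = Qⁿ1 (so g_n ≥ εⁿ pointwise), the Markov operators S_n by (S_nφ)(q) = Q(g_n φ)(q)/(Q g_n)(q), and the operators K_n recursively by K_0 = Id and K_{n+1} = S_n ∘ K_n. Then for every probability measure μ on X, every n ∈ ℕ and every bounded measurable function φ, Φ_n(μ)(φ) = μ(g_n · (K_n φ)) / μ(g_n). -/
open MeasureTheory ProbabilityTheory

/-- The weights `g_n = Qⁿ1`. -/
noncomputable def gfun {X : Type*} [MeasurableSpace X] (κ : Kernel X X) (n : ℕ) : X → ℝ :=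
  (evolOp κ)^[n] (fun _ => (1:ℝ))

/-- The Markov operators `(S_n φ)(q) = Q(g_n φ)(q) / (Q g_n)(q)`. -/
noncomputable def Sop {X : Type*} [MeasurableSpace X] (κ : Kernel X X) (n : ℕ)
    (φ : X → ℝ) : X → ℝ :=
  fun q => evolOp κ (fun q' => gfun κ n q' * φ q') q / evolOp κ (gfun κ n) q

/-- The composed operators `K_0 = Id`, `K_{n+1} = S_n ∘ K_n`. -/
noncomputable def Kop {X : Type*} [MeasurableSpace X] (κ : Kernel X X) :
    ℕ → (X → ℝ) → (X → ℝ)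
  | 0 => id
  | n + 1 => Sop κ n ∘ Kop κ n

theorem bddMeas_evolOp {X : Type*} [MeasurableSpace X] (κ : Kernel X X) [IsFiniteKernel κ]
    (ε : ℝ) (η : Measure X) (hmin : Minorizes (evolOp κ) ε η)
    (φ : X → ℝ) (hφ : BddMeas φ) (h0 : ∀ x, 0 ≤ φ x) (hε : 0 < ε) : BddMeas (evolOp κ φ) := by
  refine ⟨?_, ε⁻¹ * ∫ x, φ x ∂η, fun x => ?_⟩
  · exact (StronglyMeasurable.integral_kernel (κ := κ) hφ.1.stronglyMeasurable).measurable
  · obtain ⟨h1, h2⟩ := hmin φ hφ h0 x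
    have h3 : 0 ≤ ∫ x, φ x ∂η := integral_nonneg h0
    rw [abs_of_nonneg (le_trans (by positivity) h1)]
    exact h2

theorem gfun_props {X : Type*} [MeasurableSpace X] (κ : Kernel X X) [IsFiniteKernel κ]
    (ε : ℝ) (hε : 0 < ε) (η : Measure X) [IsProbabilityMeasure η]
    (hmin : Minorizes (evolOp κ) ε η) (n : ℕ) :
    BddMeas (gfun κ n) ∧ ∀ q, ε ^ n ≤ gfun κ n q := by
  induction n with
  | zero => exact ⟨⟨measurable_const, 1, fun x => by simp [gfun]⟩, fun q => by simp [gfun]⟩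
  | succ n ih =>
    obtain ⟨hb, hl⟩ := ih
    have hs : gfun κ (n + 1) = evolOp κ (gfun κ n) := by
      simp only [gfun, Function.iterate_succ_apply']
    have h0 : ∀ x, 0 ≤ gfun κ n x := fun x => le_trans (by positivity) (hl x)
    rw [hs]
    refine ⟨bddMeas_evolOp κ ε η hmin _ hb h0 hε, fun q => ?_⟩
    refine le_trans ?_ (hmin _ hb h0 q).1
    rw [pow_succ']
    refine mul_le_mul_of_nonneg_left ?_ hε.le
    obtain ⟨C, hC⟩ := hb.2
    have hi : Integrable (gfun κ n) η :=
      Integrable.of_bound hb.1.aestronglyMeasurable C (Filter.Eventually.of_forall hC)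
    have := integral_mono (μ := η) (integrable_const (ε ^ n)) hi hl
    simpa using this

theorem gfun_mul_Kop {X : Type*} [MeasurableSpace X] (κ : Kernel X X) [IsFiniteKernel κ]
    (ε : ℝ) (hε : 0 < ε) (η : Measure X) [IsProbabilityMeasure η]
    (hmin : Minorizes (evolOp κ) ε η) (φ : X → ℝ) (n : ℕ) :
    (fun q => gfun κ n q * Kop κ n φ q) = (evolOp κ)^[n] φ := by
  induction n with
  | zero => funext q; simp [gfun, Kop]
  | succ n ih =>
    have hs : gfun κ (n + 1) = evolOp κ (gfun κ n) := by
      simp only [gfun, Function.iterate_succ_apply']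
    funext q
    have hp := (gfun_props κ ε hε η hmin (n + 1)).2 q
    have hne : evolOp κ (gfun κ n) q ≠ 0 := by
      rw [← hs]
      exact (lt_of_lt_of_le (by positivity) hp).ne'
    rw [Function.iterate_succ_apply', ← ih, hs]
    simp only [Kop, Function.comp, Sop]
    exact mul_div_cancel₀ _ hne

/-- Path-space reformulation of the discretized Feynman–Kac semigroup:
`Φ_n(μ)(φ) = μ(g_n · (K_n φ)) / μ(g_n)`. -/
theorem feynman_kac_weighted_reformulation
    {X : Type*} [MeasurableSpace X] (κ : Kernel X X) [IsFiniteKernel κ]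
    (ε : ℝ) (hε : ε ∈ Set.Ioo (0:ℝ) 1) (η : Measure X) [IsProbabilityMeasure η]
    (hmin : Minorizes (evolOp κ) ε η)
    (μ : Measure X) [IsProbabilityMeasure μ] (n : ℕ)
    (φ : X → ℝ) (hφ : BddMeas φ) :
    FK κ μ n φ = (∫ q, gfun κ n q * Kop κ n φ q ∂μ) / (∫ q, gfun κ n q ∂μ) := by
  rw [FK, ← gfun_mul_Kop κ ε hε.1 η hmin φ n]
  rfl
end

section
/- Let X be a measurable space and let Q and Q̃ be weighted evolution operators on X, each satisfying the minorization condition (with possibly different constants and reference probability measures), and let ν and ν̃ be their respective unique invariant probability measures (the fixed points of the associated nonlinear maps, i.e., ν(Qφ) = ν(Q1)ν(φ) and ν̃(Q̃φ) = ν̃(Q̃1)ν̃(φ) for all bounded measurable φ). Suppose T and U are positive linear operators on the bounded measurable functions on X for which there exists α > 0 such that α φ ≤ Uφ ≤ α⁻¹ φ and α φ ≤ Tφ ≤ α⁻¹ φ pointwise for every bounded measurable φ ≥ 0, and suppose (Q̃)ⁿ = T ∘ Qⁿ ∘ U for every n ≥ 1. Then for every bounded measurable function φ, ν̃(φ) =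 ν(Uφ) / ν(U1). -/
open MeasureTheory ProbabilityTheory

namespace TUaux

variable {X : Type*} [MeasurableSpace X]

lemma bm_integrable {f : X → ℝ} (hf : BddMeas f) (μ : Measure X) [IsFiniteMeasure μ] :
    Integrable f μ := by
  obtain ⟨hm, C, hC⟩ := hf
  exact Integrable.of_bound hm.aestronglyMeasurable C (Filter.Eventually.of_forall hC)

lemma bm_comb {f g : X → ℝ} (hf : BddMeas f) (hg : BddMeas g) (a b : ℝ) :
    BddMeas (fun x => a * f x + b * g x) := by
  obtain ⟨hfm, C, hC⟩ := hf
  obtain ⟨hgm, D, hD⟩ := hg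
  refine ⟨(hfm.const_mul a).add (hgm.const_mul b), |a| * C + |b| * D, fun x => ?_⟩
  refine (abs_add_le _ _).trans ?_
  rw [abs_mul, abs_mul]
  have := hC x
  have := hD x
  gcongr

lemma bm_const (c : ℝ) : BddMeas (fun _ : X => c) := ⟨measurable_const, |c|, fun _ => le_rfl⟩

lemma int_comb {f g : X → ℝ} (hf : BddMeas f) (hg : BddMeas g) (a b : ℝ)
    (μ : Measure X) [IsFiniteMeasure μ] :
    ∫ x, (a * f x + b * g x) ∂μ = a * ∫ x, f x ∂μ + b * ∫ x, g x ∂μ := by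
  rw [integral_add ((bm_integrable hf μ).const_mul a) ((bm_integrable hg μ).const_mul b),
    integral_const_mul, integral_const_mul]

lemma ev_comb (κ : Kernel X X) [IsFiniteKernel κ] {f g : X → ℝ} (hf : BddMeas f)
    (hg : BddMeas g) (a b : ℝ) (q : X) :
    evolOp κ (fun x => a * f x + b * g x) q = a * evolOp κ f q + b * evolOp κ g q :=
  int_comb hf hg a b (κ q)

lemma ev_nonneg (κ : Kernel X X) {f : X → ℝ} (hf : ∀ x, 0 ≤ f x) (q : X) :
    0 ≤ evolOp κ f q := integral_nonneg hf

lemma ev_bm (κ : Kernel X X) [IsFiniteKernel κ] {f : X → ℝ} (hf : BddMeas f) :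
    BddMeas (evolOp κ f) := by
  obtain ⟨hm, C, hC⟩ := hf
  refine ⟨(hm.stronglyMeasurable.integral_kernel (κ := κ)).measurable,
    |C| * κ.bound.toReal, fun q => ?_⟩
  have h1 := norm_integral_le_of_norm_le_const (μ := κ q) (f := f) (C := |C|)
    (Filter.Eventually.of_forall fun x => (hC x).trans (le_abs_self C))
  refine h1.trans ?_
  have : (κ q).real Set.univ ≤ κ.bound.toReal :=
    ENNReal.toReal_mono κ.bound_ne_top (κ.measure_le_bound q Set.univ)
  gcongr

lemma iter_bm (κ : Kernel X X) [IsFiniteKernel κ] {f : X → ℝ} (hf : BddMeas f) (n : ℕ) :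
    BddMeas ((evolOp κ)^[n] f) := by
  induction n with
  | zero => exact hf
  | succ n ih => rw [Function.iterate_succ_apply']; exact ev_bm κ ih

lemma iter_nonneg (κ : Kernel X X) {f : X → ℝ} (hf : ∀ x, 0 ≤ f x) (n : ℕ) :
    ∀ x, 0 ≤ (evolOp κ)^[n] f x := by
  induction n with
  | zero => exact hf
  | succ n ih => rw [Function.iterate_succ_apply']; exact ev_nonneg κ ih

lemma iter_fix (κ : Kernel X X) [IsFiniteKernel κ] (ν : Measure X) (hν : FixedPt κ ν)
    {f : X → ℝ} (hf : BddMeas f) (n : ℕ) :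
    ∫ x, (evolOp κ)^[n] f x ∂ν
      = (∫ q, evolOp κ (fun _ => (1:ℝ)) q ∂ν) ^ n * ∫ x, f x ∂ν := by
  induction n with
  | zero => simp
  | succ n ih =>
    simp only [Function.iterate_succ_apply']
    rw [hν _ (iter_bm κ hf n), ih]; ring

lemma two_sided (κ : Kernel X X) [IsFiniteKernel κ] (ε : ℝ) (hε : 0 < ε) (η : Measure X)
    (hmin : Minorizes (evolOp κ) ε η) (ν : Measure X) [IsProbabilityMeasure ν]
    {g : X → ℝ} (hg : BddMeas g) (hg0 : ∀ x, 0 ≤ g x) (q : X) :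
    ε ^ 2 * ∫ x, evolOp κ g x ∂ν ≤ evolOp κ g q ∧
      ε ^ 2 * evolOp κ g q ≤ ∫ x, evolOp κ g x ∂ν := by
  have hi := bm_integrable (ev_bm κ hg) ν
  have hq := hmin g hg hg0
  have h1 : ∫ x, evolOp κ g x ∂ν ≤ ε⁻¹ * ∫ x, g x ∂η := by
    have := integral_mono hi (integrable_const (ε⁻¹ * ∫ x, g x ∂η)) (fun x => (hq x).2)
    simpa using this
  have h2 : ε * ∫ x, g x ∂η ≤ ∫ x, evolOp κ g x ∂ν := by
    have := integral_mono (integrable_const (ε * ∫ x, g x ∂η)) hi (fun x => (hq x).1)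
    simpa using this
  have key : ε ^ 2 * (ε⁻¹ * ∫ x, g x ∂η) = ε * ∫ x, g x ∂η := by field_simp
  constructor
  · calc _ ≤ ε ^ 2 * (ε⁻¹ * ∫ x, g x ∂η) := by gcongr
      _ ≤ _ := by rw [key]; exact (hq q).1
  · calc _ ≤ ε ^ 2 * (ε⁻¹ * ∫ x, g x ∂η) := by have := (hq q).2; gcongr
      _ ≤ _ := by rw [key]; exact h2

lemma contract_one (κ : Kernel X X) [IsFiniteKernel κ] (ε : ℝ) (hε : 0 < ε) (η : Measure X)
    (hmin : Minorizes (evolOp κ) ε η) (ν : Measure X) [IsProbabilityMeasure ν]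
    {f h : X → ℝ} (hf : BddMeas f) (hh : BddMeas h) (hh0 : ∀ x, 0 ≤ h x) (a s : ℝ) (ha : 0 ≤ a)
    (hfh : ∀ x, 0 ≤ a * h x + s * f x) (h0 : ∫ x, evolOp κ f x ∂ν = 0) (q : X) :
    -((1 - ε ^ 4) * a * evolOp κ h q) ≤ s * evolOp κ f q := by
  have h1 := (two_sided κ ε hε η hmin ν (bm_comb hh hf a s) hfh q).1
  have h2 := (two_sided κ ε hε η hmin ν hh hh0 q).2
  simp only [ev_comb κ hh hf] at h1
  rw [int_comb (ev_bm κ hh) (ev_bm κ hf), h0] at h1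
  have h3 := mul_le_mul_of_nonneg_left h2 (by positivity : 0 ≤ ε ^ 2 * a)
  linarith

lemma contract (κ : Kernel X X) [IsFiniteKernel κ] (ε : ℝ) (hε : ε ∈ Set.Ioo (0:ℝ) 1)
    (η : Measure X)
    (hmin : Minorizes (evolOp κ) ε η) (ν : Measure X) [IsProbabilityMeasure ν]
    (hν : FixedPt κ ν)
    {f h : X → ℝ} (hf : BddMeas f) (hh : BddMeas h) (hh0 : ∀ x, 0 ≤ h x) (a : ℝ) (ha : 0 ≤ a)
    (hfh : ∀ x, |f x| ≤ a * h x) (h0 : ∫ x, f x ∂ν = 0) (n : ℕ) :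
    ∀ x, |(evolOp κ)^[n] f x| ≤ (1 - ε ^ 4) ^ n * a * (evolOp κ)^[n] h x := by
  have hr : 0 ≤ 1 - ε ^ 4 := sub_nonneg.2 (pow_le_one₀ hε.1.le hε.2.le)
  induction n with
  | zero => simpa using hfh
  | succ n ih =>
    have hz : ∫ x, evolOp κ ((evolOp κ)^[n] f) x ∂ν = 0 := by
      have := iter_fix κ ν hν hf (n+1)
      simp only [Function.iterate_succ_apply'] at this
      rw [this, h0, mul_zero]
    have hb : 0 ≤ (1 - ε ^ 4) ^ n * a := by positivity
    have H := fun s hs => contract_one κ ε hε.1 η hmin ν (iter_bm κ hf n) (iter_bm κ hh n)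
      (iter_nonneg κ hh0 n) ((1 - ε ^ 4) ^ n * a) s hb hs hz
    intro x
    simp only [Function.iterate_succ_apply']
    have A := H 1 (fun x => by have := abs_le.1 (ih x); linarith) x
    have B := H (-1) (fun x => by have := abs_le.1 (ih x); linarith) x
    rw [abs_le, pow_succ]
    constructor <;> linarith

end TUaux

/-- TU lemma: if `Q̃ⁿ = T ∘ Qⁿ ∘ U` for all n ≥ 1, with T and U positive operators
bounded above and below by multiples of the identity on nonnegative functions, then the
invariant probability measures of the two Feynman–Kac schemes are related by
`ν̃(φ) = ν(Uφ)/ν(U1)`. -/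
theorem TU_lemma
    {X : Type*} [MeasurableSpace X] (κ κ' : Kernel X X) [IsFiniteKernel κ] [IsFiniteKernel κ']
    (ε : ℝ) (hε : ε ∈ Set.Ioo (0:ℝ) 1) (η : Measure X) [IsProbabilityMeasure η]
    (hmin : Minorizes (evolOp κ) ε η)
    (ε' : ℝ) (hε' : ε' ∈ Set.Ioo (0:ℝ) 1) (η' : Measure X) [IsProbabilityMeasure η']
    (hmin' : Minorizes (evolOp κ') ε' η')
    (ν ν' : Measure X) [IsProbabilityMeasure ν] [IsProbabilityMeasure ν']
    (hν : FixedPt κ ν) (hν' : FixedPt κ' ν')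
    (T U : (X → ℝ) → (X → ℝ))
    (hTlin : IsLinearMap ℝ T) (hUlin : IsLinearMap ℝ U)
    (hTmaps : ∀ φ, BddMeas φ → BddMeas (T φ)) (hUmaps : ∀ φ, BddMeas φ → BddMeas (U φ))
    (hTpos : ∀ φ, BddMeas φ → (∀ x, 0 ≤ φ x) → ∀ x, 0 ≤ T φ x)
    (hUpos : ∀ φ, BddMeas φ → (∀ x, 0 ≤ φ x) → ∀ x, 0 ≤ U φ x)
    (α : ℝ) (hα : 0 < α)
    (hTbd : ∀ φ, BddMeas φ → (∀ x, 0 ≤ φ x) → ∀ x, α * φ x ≤ T φ x ∧ T φ x ≤ α⁻¹ * φ x)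
    (hUbd : ∀ φ, BddMeas φ → (∀ x, 0 ≤ φ x) → ∀ x, α * φ x ≤ U φ x ∧ U φ x ≤ α⁻¹ * φ x)
    (hTU : ∀ n : ℕ, 1 ≤ n → ∀ φ, BddMeas φ → ∀ x,
      (evolOp κ')^[n] φ x = T ((evolOp κ)^[n] (U φ)) x)
    (φ : X → ℝ) (hφ : BddMeas φ) :
    ∫ x, φ x ∂ν' = (∫ x, U φ x ∂ν) / (∫ x, U (fun _ => (1:ℝ)) x ∂ν) := by
  have h1bm : BddMeas (fun _ : X => (1:ℝ)) := TUaux.bm_const 1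
  have hr0 : 0 ≤ 1 - ε ^ 4 := sub_nonneg.2 (pow_le_one₀ hε.1.le hε.2.le)
  have hr1 : 1 - ε ^ 4 < 1 := by have := pow_pos hε.1 4; linarith
  set one : X → ℝ := fun _ => (1:ℝ) with hone
  have hU1 := hUmaps one h1bm
  have hUα : ∀ x, α ≤ U one x := fun x => by
    have := (hUbd one h1bm (fun _ => zero_le_one) x).1
    simpa [hone] using this
  have hU0 : ∀ x, 0 ≤ U one x := fun x => hα.le.trans (hUα x)
  have hνU : 0 < ∫ x, U one x ∂ν := by
    have := integral_mono (integrable_const α) (TUaux.bm_integrable hU1 ν) hUα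
    simp only [integral_const, probReal_univ, one_smul] at this
    linarith
  set c := (∫ x, U φ x ∂ν) / (∫ x, U one x ∂ν) with hc
  have lin : ∀ S : (X → ℝ) → (X → ℝ), IsLinearMap ℝ S → ∀ (f g : X → ℝ) (a b : ℝ) (x : X),
      S (fun x => a * f x + b * g x) x = a * S f x + b * S g x := by
    intro S hS f g a b x
    have : (fun x => a * f x + b * g x) = a • f + b • g := by ext; simp
    rw [this, hS.map_add, hS.map_smul, hS.map_smul]; simp
  set θ : X → ℝ := fun x => 1 * φ x + (-c) * one x with hθ
  have hθbm : BddMeas θ := TUaux.bm_comb hφ h1bm 1 (-c)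
  have hUθ := hUmaps θ hθbm
  have hz : ∫ x, U θ x ∂ν = 0 := by
    have : ∀ x, U θ x = 1 * U φ x + (-c) * U one x := fun x => lin U hUlin φ one 1 (-c) x
    simp only [this]
    rw [TUaux.int_comb (hUmaps φ hφ) hU1, hc]
    field_simp
    ring
  have hθν : ∫ x, θ x ∂ν' = ∫ x, φ x ∂ν' - c := by
    rw [hθ, TUaux.int_comb hφ h1bm, hone]
    simp
    ring
  obtain ⟨C, hC⟩ := hUθ.2
  set a := |C| / α with ha
  have ha0 : 0 ≤ a := by positivity
  have hab : ∀ x, |U θ x| ≤ a * U one x := fun x => by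
    calc |U θ x| ≤ |C| := (hC x).trans (le_abs_self C)
      _ = a * α := by rw [ha]; field_simp
      _ ≤ _ := mul_le_mul_of_nonneg_left (hUα x) ha0
  set L := ∫ q, evolOp κ' one q ∂ν' with hL
  have hLpos : 0 < L := by
    have hle : ∀ x, ε' ≤ evolOp κ' one x := fun x => by
      have := (hmin' one h1bm (fun _ => zero_le_one) x).1
      simpa [hone] using this
    have := integral_mono (integrable_const ε')
      (TUaux.bm_integrable (TUaux.ev_bm κ' h1bm) ν') hle
    simp only [integral_const, probReal_univ, one_smul] at this
    linarith [hε'.1]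
  have main : ∀ n : ℕ, 1 ≤ n → |∫ x, θ x ∂ν'| ≤ (1 - ε ^ 4) ^ n * a := by
    intro n hn
    have hcon := TUaux.contract κ ε hε η hmin ν hν hUθ hU1 hU0 a ha0 hab hz n
    set b := (1 - ε ^ 4) ^ n * a with hb
    have hF := TUaux.iter_bm κ hUθ n
    have hG := TUaux.iter_bm κ hU1 n
    have H : ∀ s : ℝ, (∀ x, 0 ≤ b * (evolOp κ)^[n] (U one) x + s * (evolOp κ)^[n] (U θ) x) →
        0 ≤ b + s * ∫ x, θ x ∂ν' := by
      intro s hs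
      have h1 : ∀ x, 0 ≤ b * (evolOp κ')^[n] one x + s * (evolOp κ')^[n] θ x := fun x => by
        rw [hTU n hn one h1bm, hTU n hn θ hθbm, ← lin T hTlin]
        exact hTpos _ (TUaux.bm_comb hG hF b s) hs x
      have h2 : 0 ≤ ∫ x, (b * (evolOp κ')^[n] one x + s * (evolOp κ')^[n] θ x) ∂ν' :=
        integral_nonneg h1
      rw [TUaux.int_comb (TUaux.iter_bm κ' h1bm n) (TUaux.iter_bm κ' hθbm n),
        TUaux.iter_fix κ' ν' hν' h1bm, TUaux.iter_fix κ' ν' hν' hθbm] at h2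
      have h3 : ∫ x, one x ∂ν' = 1 := by simp [hone]
      rw [h3] at h2
      have h4 : 0 < L ^ n := pow_pos hLpos n
      refine nonneg_of_mul_nonneg_right (a := L ^ n) ?_ h4
      calc 0 ≤ _ := h2
        _ = _ := by rw [hL]; ring
    have A := H 1 (fun x => by have := abs_le.1 (hcon x); linarith)
    have B := H (-1) (fun x => by have := abs_le.1 (hcon x); linarith)
    rw [abs_le]
    constructor <;> linarith
  have hlim : Filter.Tendsto (fun n : ℕ => (1 - ε ^ 4) ^ n * a) Filter.atTop (nhds 0) := by
    simpa using (tendsto_pow_atTop_nhds_zero_of_lt_one hr0 hr1).mul_const a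
  have hfin : |∫ x, θ x ∂ν'| ≤ 0 :=
    ge_of_tendsto hlim (Filter.eventually_atTop.2 ⟨1, main⟩)
  rw [hθν] at hfin
  exact sub_eq_zero.1 (abs_nonpos_iff.1 hfin)
end

section
/- Let X be a measurable space, Q a weighted evolution operator on X, W : X → ℝ a bounded measurable function, and Δt > 0. For δ ∈ [0,1] define the weighted evolution operator Q^{W,δ} by (Q^{W,δ}φ)(q) = e^{(1−δ)Δt W(q)} · Q(e^{δ Δt W} φ)(q). Suppose Q^{W,δ₀} satisfies the minorization condition for at least one δ₀ ∈ [0,1]. Then Q^{W,δ} satisfies a minorization condition for every δ ∈ [0,1], and the associated approximate principal eigenvalue λ_Δt^δ = (1/Δt)·log ν_δ(Q^{W,δ}1), where ν_δ is the unique invariant probability measure of Q^{W,δ}, is independent of δ: λ_Δt^δ = λ_Δt^{δ'} for all δ, δ' ∈ [0,1]. -/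
open MeasureTheory ProbabilityTheory

/-- The family of weighted evolution operators
`(Q^{W,δ}φ)(q) = e^{(1−δ)Δt W(q)} · Q(e^{δΔtW} φ)(q)`. -/
noncomputable def QWdelta {X : Type*} [MeasurableSpace X] (κ : Kernel X X) (W : X → ℝ)
    (Δt δ : ℝ) (φ : X → ℝ) : X → ℝ :=
  fun q => Real.exp ((1 - δ) * Δt * W q) *
    evolOp κ (fun q' => Real.exp (δ * Δt * W q') * φ q') q


lemma conj_QW {X : Type*} [MeasurableSpace X] (κ : Kernel X X) (W : X → ℝ) (Δt δ δ' : ℝ)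
    (φ : X → ℝ) (q : X) : QWdelta κ W Δt δ φ q = Real.exp ((δ' - δ) * Δt * W q) *
      QWdelta κ W Δt δ' (fun x => Real.exp ((δ - δ') * Δt * W x) * φ x) q := by
  unfold QWdelta
  rw [← mul_assoc, ← Real.exp_add]
  congr 1
  · congr 1; ring
  · congr 1
    funext x
    rw [← mul_assoc, ← Real.exp_add]
    congr 2; ring

lemma BddMeas.intble {X : Type*} [MeasurableSpace X] {φ : X → ℝ} (h : BddMeas φ)
    (μ : Measure X) [IsFiniteMeasure μ] : Integrable φ μ := by
  obtain ⟨hm, C, hC⟩ := h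
  exact Integrable.of_bound hm.aestronglyMeasurable C (Filter.Eventually.of_forall hC)

lemma BddMeas.mul' {X : Type*} [MeasurableSpace X] {φ ψ : X → ℝ} (h : BddMeas φ)
    (h' : BddMeas ψ) : BddMeas (fun x => φ x * ψ x) := by
  obtain ⟨hm, C, hC⟩ := h
  obtain ⟨hm', C', hC'⟩ := h'
  refine ⟨hm.mul hm', C * C', fun x => ?_⟩
  rw [abs_mul]
  exact mul_le_mul (hC x) (hC' x) (abs_nonneg _) ((abs_nonneg _).trans (hC x))

/-- two-sided exponential bounds -/
lemma exp_bds {X : Type*} [MeasurableSpace X] {W : X → ℝ} (hW : BddMeas W) {Δt : ℝ}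
    (hΔt : 0 < Δt) : ∃ c : ℝ, 1 ≤ c ∧ ∀ s : ℝ, |s| ≤ 1 → ∀ x,
      c⁻¹ ≤ Real.exp (s * Δt * W x) ∧ Real.exp (s * Δt * W x) ≤ c := by
  obtain ⟨hm, C, hC⟩ := hW
  refine ⟨Real.exp (Δt * |C|), Real.one_le_exp (by positivity), fun s hs x => ?_⟩
  have h : |s * Δt * W x| ≤ Δt * |C| := by
    rw [abs_mul, abs_mul, abs_of_pos hΔt]
    have h1 : |W x| ≤ |C| := (hC x).trans (le_abs_self C)
    have h2 : |s| * Δt ≤ Δt := by nlinarith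
    exact mul_le_mul h2 h1 (abs_nonneg _) hΔt.le
  rw [← Real.exp_neg]
  exact ⟨Real.exp_le_exp.2 (abs_le.1 h).1, Real.exp_le_exp.2 (abs_le.1 h).2⟩

lemma exp_bdd {X : Type*} [MeasurableSpace X] {W : X → ℝ} (hW : BddMeas W) {Δt : ℝ}
    (hΔt : 0 < Δt) {s : ℝ} (hs : |s| ≤ 1) : BddMeas (fun x => Real.exp (s * Δt * W x)) := by
  obtain ⟨c, hc, h⟩ := exp_bds hW hΔt
  refine ⟨Real.measurable_exp.comp (hW.1.const_mul _), c, fun x => ?_⟩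
  rw [abs_of_pos (Real.exp_pos _)]
  exact (h s hs x).2

lemma abs_sub_le_one' {a b : ℝ} (ha : a ∈ Set.Icc (0:ℝ) 1) (hb : b ∈ Set.Icc (0:ℝ) 1) :
    |a - b| ≤ 1 := by
  rw [abs_le]; constructor <;> linarith [ha.1, ha.2, hb.1, hb.2]

lemma minor_all {X : Type*} [MeasurableSpace X] (κ : Kernel X X)
    (W : X → ℝ) (hW : BddMeas W) (Δt : ℝ) (hΔt : 0 < Δt)
    (δ₀ : ℝ) (hδ₀ : δ₀ ∈ Set.Icc (0:ℝ) 1)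
    (ε₀ : ℝ) (hε₀ : ε₀ ∈ Set.Ioo (0:ℝ) 1) (η₀ : Measure X) [IsProbabilityMeasure η₀]
    (hmin₀ : Minorizes (QWdelta κ W Δt δ₀) ε₀ η₀) (δ : ℝ) (hδ : δ ∈ Set.Icc (0:ℝ) 1) :
    ∃ ε ∈ Set.Ioo (0:ℝ) 1, Minorizes (QWdelta κ W Δt δ) ε η₀ := by
  obtain ⟨c, hc, h⟩ := exp_bds hW hΔt
  have hc0 : 0 < c := by linarith
  have hci : c⁻¹ ≤ 1 := inv_le_one_of_one_le₀ hc
  have hci0 : 0 < c⁻¹ := inv_pos.2 hc0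
  have he0 := hε₀.1
  refine ⟨c⁻¹ * (ε₀ * c⁻¹), ⟨by positivity, ?_⟩, ?_⟩
  · have : ε₀ * c⁻¹ < 1 := by nlinarith [hε₀.2]
    nlinarith
  intro φ hφ h0 q
  have hb := (exp_bdd hW hΔt (abs_sub_le_one' hδ hδ₀)).mul' hφ
  obtain ⟨h1, h2⟩ := hmin₀ _ hb (fun x => mul_nonneg (Real.exp_pos _).le (h0 x)) q
  have hi0 : 0 ≤ ∫ x, φ x ∂η₀ := integral_nonneg h0
  have i1 : c⁻¹ * ∫ x, φ x ∂η₀ ≤ ∫ x, Real.exp ((δ - δ₀) * Δt * W x) * φ x ∂η₀ := by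
    rw [← integral_const_mul]
    exact integral_mono ((hφ.intble η₀).const_mul _) (hb.intble η₀)
      fun x => mul_le_mul_of_nonneg_right (h _ (abs_sub_le_one' hδ hδ₀) x).1 (h0 x)
  have i2 : ∫ x, Real.exp ((δ - δ₀) * Δt * W x) * φ x ∂η₀ ≤ c * ∫ x, φ x ∂η₀ := by
    rw [← integral_const_mul]
    exact integral_mono (hb.intble η₀) ((hφ.intble η₀).const_mul _)
      fun x => mul_le_mul_of_nonneg_right (h _ (abs_sub_le_one' hδ hδ₀) x).2 (h0 x)
  obtain ⟨g1, g2⟩ := h _ (abs_sub_le_one' hδ₀ hδ) q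
  rw [conj_QW κ W Δt δ δ₀ φ q]
  have j1 := (mul_le_mul_of_nonneg_left i1 he0.le).trans h1
  have j2 := h2.trans (mul_le_mul_of_nonneg_left i2 (inv_pos.2 he0).le)
  constructor
  · calc _ = c⁻¹ * (ε₀ * (c⁻¹ * ∫ x, φ x ∂η₀)) := by ring
      _ ≤ _ := mul_le_mul g1 j1 (by positivity) (Real.exp_pos _).le
  · calc _ ≤ c * (ε₀⁻¹ * (c * ∫ x, φ x ∂η₀)) :=
          mul_le_mul g2 j2 (le_trans (by positivity) j1) hc0.le
      _ = _ := by rw [mul_inv, mul_inv, inv_inv]; ring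

lemma le_of_pow_le {a b m K : ℝ} (hb : 0 < b) (hm : 0 < m)
    (h : ∀ n : ℕ, a ^ (n+1) * m ≤ K * b ^ (n+1)) : a ≤ b := by
  by_contra hab
  push Not at hab
  have h1 : 1 < a / b := (one_lt_div hb).2 hab
  obtain ⟨n, hn⟩ := pow_unbounded_of_one_lt (K / m) h1
  have h2 : (a / b) ^ n ≤ (a / b) ^ (n+1) := pow_le_pow_right₀ h1.le (Nat.le_succ n)
  have h3 := lt_of_lt_of_le hn h2
  rw [div_pow, div_lt_div_iff₀ hm (pow_pos hb _)] at h3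
  linarith [h n]

lemma QW_meas {X : Type*} [MeasurableSpace X] (κ : Kernel X X) [IsFiniteKernel κ]
    (W : X → ℝ) (hW : Measurable W) (Δt δ : ℝ) (φ : X → ℝ) (hφ : Measurable φ) :
    Measurable (QWdelta κ W Δt δ φ) := by
  unfold QWdelta evolOp
  have hf : Measurable (fun q' => Real.exp (δ * Δt * W q') * φ q') := by fun_prop
  exact (Real.measurable_exp.comp (hW.const_mul _)).mul
    (hf.stronglyMeasurable.integral_kernel (κ := κ)).measurable

lemma QW_good {X : Type*} [MeasurableSpace X] (κ : Kernel X X) [IsFiniteKernel κ]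
    (W : X → ℝ) (hW : Measurable W) (Δt δ ε : ℝ) (hε : 0 < ε) (η : Measure X)
    (hmin : Minorizes (QWdelta κ W Δt δ) ε η) (φ : X → ℝ) (hφ : BddMeas φ)
    (h0 : ∀ x, 0 ≤ φ x) :
    BddMeas (QWdelta κ W Δt δ φ) ∧ ∀ x, 0 ≤ QWdelta κ W Δt δ φ x := by
  have hn : ∀ x, 0 ≤ QWdelta κ W Δt δ φ x := fun x =>
    le_trans (mul_nonneg hε.le (integral_nonneg h0)) (hmin φ hφ h0 x).1
  refine ⟨⟨QW_meas κ W hW Δt δ φ hφ.1, ε⁻¹ * ∫ x, φ x ∂η, fun x => ?_⟩, hn⟩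
  rw [abs_of_nonneg (hn x)]
  exact (hmin φ hφ h0 x).2

lemma eig_le {X : Type*} [MeasurableSpace X] (κ : Kernel X X) [IsFiniteKernel κ]
    (W : X → ℝ) (hW : BddMeas W) (Δt : ℝ) (hΔt : 0 < Δt)
    (δ δ' : ℝ) (hδ : δ ∈ Set.Icc (0:ℝ) 1) (hδ' : δ' ∈ Set.Icc (0:ℝ) 1)
    (ε : ℝ) (hε : ε ∈ Set.Ioo (0:ℝ) 1) (η : Measure X) [IsProbabilityMeasure η]
    (hmin : Minorizes (QWdelta κ W Δt δ') ε η)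
    (ν ν' : Measure X) [IsProbabilityMeasure ν] [IsProbabilityMeasure ν'] (l l' : ℝ)
    (hl' : 0 < l')
    (h : ∀ φ : X → ℝ, BddMeas φ → ∫ q, QWdelta κ W Δt δ φ q ∂ν = l * ∫ q, φ q ∂ν)
    (h' : ∀ φ : X → ℝ, BddMeas φ → ∫ q, QWdelta κ W Δt δ' φ q ∂ν' = l' * ∫ q, φ q ∂ν') :
    l ≤ l' := by
  obtain ⟨c, hc, hcb⟩ := exp_bds hW hΔt
  have hc0 : 0 < c := by linarith
  have he0 := hε.1
  set ψ : ℕ → X → ℝ := fun n => (QWdelta κ W Δt δ')^[n] (fun _ => 1) with hψ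
  have hsucc : ∀ n, ψ (n+1) = QWdelta κ W Δt δ' (ψ n) := fun n =>
    Function.iterate_succ_apply' _ _ _
  have good : ∀ n, BddMeas (ψ n) ∧ ∀ x, 0 ≤ ψ n x := by
    intro n
    induction n with
    | zero => exact ⟨⟨measurable_const, 1, fun x => by simp [hψ]⟩, fun x => by simp [hψ]⟩
    | succ n ih =>
      rw [hsucc]
      exact QW_good κ W hW.1 Δt δ' ε he0 η hmin _ ih.1 ih.2
  set g : X → ℝ := fun x => Real.exp ((δ' - δ) * Δt * W x) with hg
  have hgb : BddMeas g := exp_bdd hW hΔt (abs_sub_le_one' hδ' hδ)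
  have p' : ∀ n, ∫ q, ψ n q ∂ν' = l' ^ n := by
    intro n
    induction n with
    | zero => simp [hψ]
    | succ n ih => rw [hsucc, h' _ (good n).1, ih, pow_succ']
  have p : ∀ n, ∫ q, g q * ψ n q ∂ν = l ^ n * ∫ q, g q ∂ν := by
    intro n
    induction n with
    | zero => simp [hψ]
    | succ n ih =>
      have : ∀ q, g q * ψ (n+1) q = QWdelta κ W Δt δ (fun x => g x * ψ n x) q := by
        intro q
        rw [hsucc, conj_QW κ W Δt δ' δ (ψ n) q, ← mul_assoc, hg, ← Real.exp_add]
        rw [show (δ' - δ) * Δt * W q + (δ - δ') * Δt * W q = 0 by ring, Real.exp_zero, one_mul]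
      simp_rw [this]
      rw [h _ (hgb.mul' (good n).1), ih, pow_succ']
      ring
  have hgpos : c⁻¹ ≤ ∫ q, g q ∂ν := by
    have := integral_mono (integrable_const c⁻¹) (hgb.intble ν)
      fun x => (hcb _ (abs_sub_le_one' hδ' hδ) x).1
    simpa using this
  refine le_of_pow_le (m := ∫ q, g q ∂ν) (K := c * (ε⁻¹ * ε⁻¹)) hl'
    (lt_of_lt_of_le (inv_pos.2 hc0) hgpos) fun n => ?_
  rw [← p, ← p']
  have hi0 : 0 ≤ ∫ x, ψ n x ∂η := integral_nonneg (good n).2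
  have b1 : ∫ q, g q * ψ (n+1) q ∂ν ≤ c * (ε⁻¹ * ∫ x, ψ n x ∂η) := by
    have := integral_mono ((hgb.mul' (good (n+1)).1).intble ν)
      (integrable_const (c * (ε⁻¹ * ∫ x, ψ n x ∂η)))
      fun x => mul_le_mul (hcb _ (abs_sub_le_one' hδ' hδ) x).2
        ((hsucc n) ▸ (hmin _ (good n).1 (good n).2 x).2) ((good (n+1)).2 x) hc0.le
    simpa using this
  have b2 : ε * ∫ x, ψ n x ∂η ≤ ∫ q, ψ (n+1) q ∂ν' := by
    have := integral_mono (integrable_const (ε * ∫ x, ψ n x ∂η)) ((good (n+1)).1.intble ν')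
      fun x => (hsucc n) ▸ (hmin _ (good n).1 (good n).2 x).1
    simpa using this
  have b3 : ∫ x, ψ n x ∂η ≤ ε⁻¹ * ∫ q, ψ (n+1) q ∂ν' := by
    rw [inv_mul_eq_div, le_div_iff₀ he0]; linarith
  calc _ ≤ _ := b1
    _ ≤ c * (ε⁻¹ * (ε⁻¹ * ∫ q, ψ (n+1) q ∂ν')) := by gcongr
    _ = _ := by ring

lemma eig_pos {X : Type*} [MeasurableSpace X] (κ : Kernel X X) [IsFiniteKernel κ]
    (W : X → ℝ) (hW : BddMeas W) (Δt : ℝ) (δ : ℝ)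
    (ε : ℝ) (hε : ε ∈ Set.Ioo (0:ℝ) 1) (η : Measure X) [IsProbabilityMeasure η]
    (hmin : Minorizes (QWdelta κ W Δt δ) ε η) (ν : Measure X) [IsProbabilityMeasure ν] :
    0 < ∫ q, QWdelta κ W Δt δ (fun _ => (1:ℝ)) q ∂ν := by
  have h1 : BddMeas (fun _ : X => (1:ℝ)) := ⟨measurable_const, 1, fun x => by simp⟩
  have hb := (QW_good κ W hW.1 Δt δ ε hε.1 η hmin _ h1 (fun _ => zero_le_one)).1
  have := integral_mono (integrable_const ε) (hb.intble ν)
    fun x => by simpa using (hmin _ h1 (fun _ => zero_le_one) x).1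
  simp only [integral_const, probReal_univ, one_smul] at this
  exact lt_of_lt_of_le hε.1 this

/-- The approximate principal eigenvalue of the familly of schemes `Q^{W,δ}` is
independent of the integration rule δ ∈ [0,1]: if one of the schemes satisfies a
minorization condition, then all of them do, and the associated eigenvalues
`(1/Δt) log ν_δ(Q^{W,δ}1)` all coincide. -/
theorem eigenvalue_independent_of_integration_rule
    {X : Type*} [MeasurableSpace X] (κ : Kernel X X) [IsFiniteKernel κ]
    (W : X → ℝ) (hW : BddMeas W) (Δt : ℝ) (hΔt : 0 < Δt)
    (δ₀ : ℝ) (hδ₀ : δ₀ ∈ Set.Icc (0:ℝ) 1)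
    (ε₀ : ℝ) (hε₀ : ε₀ ∈ Set.Ioo (0:ℝ) 1) (η₀ : Measure X) [IsProbabilityMeasure η₀]
    (hmin₀ : Minorizes (QWdelta κ W Δt δ₀) ε₀ η₀) :
    (∀ δ ∈ Set.Icc (0:ℝ) 1, ∃ ε ∈ Set.Ioo (0:ℝ) 1, ∃ η : Measure X,
      IsProbabilityMeasure η ∧ Minorizes (QWdelta κ W Δt δ) ε η) ∧
    (∀ δ ∈ Set.Icc (0:ℝ) 1, ∀ δ' ∈ Set.Icc (0:ℝ) 1,
      ∀ ν ν' : Measure X, IsProbabilityMeasure ν → IsProbabilityMeasure ν' →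
      (∀ φ : X → ℝ, BddMeas φ → ∫ q, QWdelta κ W Δt δ φ q ∂ν =
        (∫ q, QWdelta κ W Δt δ (fun _ => (1:ℝ)) q ∂ν) * ∫ q, φ q ∂ν) →
      (∀ φ : X → ℝ, BddMeas φ → ∫ q, QWdelta κ W Δt δ' φ q ∂ν' =
        (∫ q, QWdelta κ W Δt δ' (fun _ => (1:ℝ)) q ∂ν') * ∫ q, φ q ∂ν') →
      (1 / Δt) * Real.log (∫ q, QWdelta κ W Δt δ (fun _ => (1:ℝ)) q ∂ν) =
        (1 / Δt) * Real.log (∫ q, QWdelta κ W Δt δ' (fun _ => (1:ℝ)) q ∂ν')) := by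
  refine ⟨fun δ hδ => ?_, ?_⟩
  · obtain ⟨ε, hε, h⟩ := minor_all κ W hW Δt hΔt δ₀ hδ₀ ε₀ hε₀ η₀ hmin₀ δ hδ
    exact ⟨ε, hε, η₀, inferInstance, h⟩
  intro δ hδ δ' hδ' ν ν' _ _ h h'
  obtain ⟨ε, hε, hm⟩ := minor_all κ W hW Δt hΔt δ₀ hδ₀ ε₀ hε₀ η₀ hmin₀ δ hδ
  obtain ⟨ε', hε', hm'⟩ := minor_all κ W hW Δt hΔt δ₀ hδ₀ ε₀ hε₀ η₀ hmin₀ δ' hδ'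
  have hp := eig_pos κ W hW Δt δ ε hε η₀ hm ν
  have hp' := eig_pos κ W hW Δt δ' ε' hε' η₀ hm' ν'
  congr 2
  exact le_antisymm
    (eig_le κ W hW Δt hΔt δ δ' hδ hδ' ε' hε' η₀ hm' ν ν' _ _ hp' h h')
    (eig_le κ W hW Δt hΔt δ' δ hδ' hδ ε hε η₀ hm ν' ν _ _ hp h' h)
end

section
/- Let d ≥ 1 and let S denote the space of smooth ℤ^d-periodic functions ℝ^d → ℝ. Let p ≥ 1, Δt* > 0, and let A_1, …, A_{p+1} : S → S be linear maps with A_1 1 = 0 such that each A_k is bounded from some C^{m_k} norm to the C⁰ norm (there exist c_k ≥ 0 and m_k ∈ ℕ with ‖A_k φ‖_{C⁰} ≤ c_k ‖φ‖_{C^{m_k}} for all φ ∈ S). Let (Q_Δt)_{Δt ∈ (0,Δt*]} be linear maps S → S such that the remainders R_Δt φ := Δt^{−(p+2)}(Q_Δt φ − φ − Σ_{k=1}^{p+1} Δt^k A_k φ) satisfy a uniform bound: there exist c > 0 and m ∈ ℕ with ‖R_Δt φ‖_{C⁰} ≤ c ‖φ‖_{C^m} for all Δt ∈ (0,Δt*]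 and φ ∈ S. Let W ∈ S and define Q_Δt^W φ := e^{Δt W} · Q_Δt φ (pointwise multiplication). Then, setting A_0 = Id and Ã_k φ := Σ_{j=0}^{k} (W^j / j!) · A_{k−j} φ for k = 1, …, p+1 (so in particular Ã_1 = A_1 + W, meaning Ã_1 φ = A_1 φ + Wφ), the remainders R_{W,Δt} φ := Δt^{−(p+2)}(Q_Δt^W φ − φ − Σ_{k=1}^{p+1} Δt^k Ã_k φ) satisfy a uniform bound of the same type: there exist c' > 0 and m' ∈ ℕ with ‖R_{W,Δt} φ‖_{C⁰} ≤ c' ‖φ‖_{C^{m'}} for all Δt ∈ (0,Δt*] and φ ∈ S. -/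
open MeasureTheory Finset

/-- Partial derivative in the i-th coordinate direction. -/
noncomputable def pderiv' {d : ℕ} (i : Fin d) (f : (Fin d → ℝ) → ℝ) (q : Fin d → ℝ) : ℝ :=
  fderiv ℝ f q (Pi.single i 1)

/-- A function on ℝ^d is ℤ^d-periodic if it is invariant under translation by every
vector of ℤ^d. -/
def ZPeriodic {d : ℕ} (f : (Fin d → ℝ) → ℝ) : Prop :=
  ∀ (q : Fin d → ℝ) (m : Fin d → ℤ), f (fun i => q i + (m i : ℝ)) = f q

/-- The space S of smooth ℤ^d-periodic functions. -/
def SmoothPeriodic {d : ℕ} (f : (Fin d → ℝ) → ℝ) : Prop :=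
  ContDiff ℝ (⊤ : ℕ∞) f ∧ ZPeriodic f

/-- Iterated partial derivative `∂^α` along a list of coordinate directions. -/
noncomputable def iterPDeriv {d : ℕ} : List (Fin d) → ((Fin d → ℝ) → ℝ) → (Fin d → ℝ) → ℝ
  | [], f => f
  | i :: l, f => pderiv' i (iterPDeriv l f)

/-- The C^m norm: `‖f‖_{C^m} = sup_{|α| ≤ m} sup_q |∂^α f(q)|`. -/
noncomputable def CmNorm {d : ℕ} (m : ℕ) (f : (Fin d → ℝ) → ℝ) : ℝ :=
  ⨆ p : {l : List (Fin d) // l.length ≤ m} × (Fin d → ℝ), |iterPDeriv p.1.1 f p.2|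

theorem aux_fp_bdd {d : ℕ} (f : (Fin d → ℝ) → ℝ) (hf : SmoothPeriodic f) :
    ∃ B : ℝ, ∀ q, |f q| ≤ B := by
  obtain ⟨B, hB⟩ := (isCompact_Icc (a := (0 : Fin d → ℝ)) (b := 1)).exists_bound_of_continuousOn
    hf.1.continuous.continuousOn
  refine ⟨B, fun q => ?_⟩
  have h := hf.2 (fun i => Int.fract (q i)) (fun i => ⌊q i⌋)
  simp only [Int.fract_add_floor] at h
  have h2 := hB (fun i => Int.fract (q i))
    ⟨fun i => Int.fract_nonneg _, fun i => (Int.fract_lt_one _).le⟩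
  rw [← h, Real.norm_eq_abs] at h2
  exact h2

theorem aux_pderiv {d : ℕ} (i : Fin d) (f : (Fin d → ℝ) → ℝ) (hf : SmoothPeriodic f) :
    SmoothPeriodic (pderiv' i f) := by
  refine ⟨?_, ?_⟩
  · have h : ContDiff ℝ (⊤ : ℕ∞) (fderiv ℝ f) := hf.1.fderiv_right (by simp)
    exact h.clm_apply contDiff_const
  · intro q m
    have h : (fun x => f (x + fun i => (m i : ℝ))) = f := by
      funext x
      exact hf.2 x m
    have h2 := fderiv_comp_add_right (𝕜 := ℝ) (f := f) (x := q) (fun i => (m i : ℝ))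
    rw [h] at h2
    unfold pderiv'
    rw [h2]
    rfl

theorem aux_iter {d : ℕ} (l : List (Fin d)) (f : (Fin d → ℝ) → ℝ) (hf : SmoothPeriodic f) :
    SmoothPeriodic (iterPDeriv l f) := by
  induction l with
  | nil => exact hf
  | cons i l ih => exact aux_pderiv i _ ih

theorem aux_bddAbove {d : ℕ} (m : ℕ) (f : (Fin d → ℝ) → ℝ) (hf : SmoothPeriodic f) :
    BddAbove (Set.range fun p : {l : List (Fin d) // l.length ≤ m} × (Fin d → ℝ) =>
      |iterPDeriv p.1.1 f p.2|) := by
  choose B hB using fun l : List (Fin d) => aux_fp_bdd _ (aux_iter l f hf)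
  have hfin : {l : List (Fin d) | l.length ≤ m}.Finite := List.finite_length_le _ _
  obtain ⟨C, hC⟩ := (hfin.image B).bddAbove
  refine ⟨C, ?_⟩
  rintro _ ⟨p, rfl⟩
  exact (hB _ _).trans (hC ⟨_, p.1.2, rfl⟩)

theorem aux_mono {d : ℕ} {m n : ℕ} (h : m ≤ n) (f : (Fin d → ℝ) → ℝ) (hf : SmoothPeriodic f) :
    CmNorm m f ≤ CmNorm n f := by
  have : Nonempty {l : List (Fin d) // l.length ≤ m} := ⟨⟨[], by simp⟩⟩
  refine ciSup_le fun p => ?_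
  exact le_ciSup (aux_bddAbove n f hf) ((⟨p.1.1, p.1.2.trans h⟩, p.2) :
    {l : List (Fin d) // l.length ≤ n} × (Fin d → ℝ))

theorem aux_self {d : ℕ} (f : (Fin d → ℝ) → ℝ) (hf : SmoothPeriodic f) (q) :
    |f q| ≤ CmNorm 0 f :=
  le_ciSup (aux_bddAbove 0 f hf) ((⟨[], by simp⟩, q) :
    {l : List (Fin d) // l.length ≤ 0} × (Fin d → ℝ))

theorem aux_nonneg {d : ℕ} (m : ℕ) (f : (Fin d → ℝ) → ℝ) : 0 ≤ CmNorm m f :=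
  Real.iSup_nonneg fun _ => abs_nonneg _

theorem aux_exp (x : ℝ) (n : ℕ) :
    |Real.exp x - ∑ j ∈ Finset.range n, x ^ j / (Nat.factorial j)| ≤ |x| ^ n * Real.exp |x| := by
  have h := Complex.norm_exp_sub_sum_le_norm_mul_exp (x : ℂ) n
  rw [Complex.norm_real, Real.norm_eq_abs] at h
  rw [← Real.norm_eq_abs, ← Complex.norm_real]
  push_cast
  exact h

theorem aux_alg (N : ℕ) (x w Q : ℝ) (a : ℕ → ℝ) :
    Real.exp (x * w) * Q - a 0 - ∑ k ∈ Finset.Icc 1 N, x ^ k *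
        ∑ j ∈ Finset.range (k + 1), w ^ j / (Nat.factorial j) * a (k - j)
    = Real.exp (x * w) * (Q - a 0 - ∑ k ∈ Finset.Icc 1 N, x ^ k * a k)
      + ∑ k ∈ Finset.range (N + 1), x ^ k * a k *
        (Real.exp (x * w) - ∑ j ∈ Finset.range (N + 1 - k), (x * w) ^ j / (Nat.factorial j)) := by
  have key : ∀ g : ℕ → ℝ, ∑ k ∈ Finset.Icc 1 N, g k = ∑ k ∈ Finset.range (N + 1), g k - g 0 := by
    intro g
    rw [Finset.sum_range_eq_add_Ico _ (Nat.succ_pos N)]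
    have : Finset.Icc 1 N = Finset.Ico 1 (N + 1) := by ext; simp
    rw [this]; ring
  have hd : ∑ k ∈ Finset.range (N + 1), x ^ k *
        ∑ j ∈ Finset.range (k + 1), w ^ j / (Nat.factorial j) * a (k - j)
      = ∑ k ∈ Finset.range (N + 1), x ^ k * a k *
        ∑ j ∈ Finset.range (N + 1 - k), (x * w) ^ j / (Nat.factorial j) := by
    have h := Finset.sum_range_diag_flip (N + 1)
      (fun k j : ℕ => x ^ k * a k * ((x * w) ^ j / (Nat.factorial j)))
    simp only [← Finset.mul_sum] at h
    rw [← h]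
    refine Finset.sum_congr rfl fun k _ => ?_
    rw [← Finset.sum_flip, Finset.mul_sum]
    refine Finset.sum_congr rfl fun j hj => ?_
    have hj' : j ≤ k := by simpa [Nat.lt_succ_iff] using hj
    rw [mul_pow, Nat.sub_sub_self hj']
    have : x ^ k = x ^ j * x ^ (k - j) := by rw [← pow_add]; congr 1; omega
    rw [this]; ring
  rw [key, key, hd]
  simp only [mul_sub, Finset.sum_sub_distrib, ← Finset.sum_mul]
  simp
  ring

/-- If (Q_Δt) admits a uniform expansion `Q_Δt = Id + Σ_{k=1}^{p+1} Δt^k A_k + O(Δt^{p+2})`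
with `A_1 1 = 0`, then the weighted operator `Q_Δt^W = e^{ΔtW} Q_Δt` admits the uniform
expansion with operators `Ã_k = Σ_{j=0}^k (W^j/j!) A_{k−j}` (with `A_0 = Id`), so in
particular `Ã_1 = A_1 + W`. -/
theorem expansion_of_weighted_scheme
    (d : ℕ) (hd : 1 ≤ d) (p : ℕ) (hp : 1 ≤ p) (Δts : ℝ) (hΔts : 0 < Δts)
    (A : ℕ → ((Fin d → ℝ) → ℝ) → ((Fin d → ℝ) → ℝ))
    (hA0 : A 0 = id)
    (hAmap : ∀ k ∈ Finset.Icc 1 (p + 1), ∀ f, SmoothPeriodic f → SmoothPeriodic (A k f))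
    (hAadd : ∀ k ∈ Finset.Icc 1 (p + 1), ∀ f g, SmoothPeriodic f → SmoothPeriodic g →
      A k (f + g) = A k f + A k g)
    (hAsmul : ∀ k ∈ Finset.Icc 1 (p + 1), ∀ (c : ℝ) (f), SmoothPeriodic f →
      A k (c • f) = c • A k f)
    (hA1one : A 1 (fun _ => (1:ℝ)) = fun _ => (0:ℝ))
    (hAbdd : ∀ k ∈ Finset.Icc 1 (p + 1), ∃ c : ℝ, 0 ≤ c ∧ ∃ m : ℕ,
      ∀ f, SmoothPeriodic f → ∀ q, |A k f q| ≤ c * CmNorm m f)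
    (Q : ℝ → ((Fin d → ℝ) → ℝ) → ((Fin d → ℝ) → ℝ))
    (hQmap : ∀ Δt ∈ Set.Ioc (0:ℝ) Δts, ∀ f, SmoothPeriodic f → SmoothPeriodic (Q Δt f))
    (hQadd : ∀ Δt ∈ Set.Ioc (0:ℝ) Δts, ∀ f g, SmoothPeriodic f → SmoothPeriodic g →
      Q Δt (f + g) = Q Δt f + Q Δt g)
    (hQsmul : ∀ Δt ∈ Set.Ioc (0:ℝ) Δts, ∀ (c : ℝ) (f), SmoothPeriodic f →
      Q Δt (c • f) = c • Q Δt f)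
    (hR : ∃ c : ℝ, 0 < c ∧ ∃ m : ℕ, ∀ Δt ∈ Set.Ioc (0:ℝ) Δts, ∀ f, SmoothPeriodic f → ∀ q,
      |Q Δt f q - f q - ∑ k ∈ Finset.Icc 1 (p + 1), Δt ^ k * A k f q|
        ≤ c * Δt ^ (p + 2) * CmNorm m f)
    (W : (Fin d → ℝ) → ℝ) (hW : SmoothPeriodic W) :
    ∃ c' : ℝ, 0 < c' ∧ ∃ m' : ℕ, ∀ Δt ∈ Set.Ioc (0:ℝ) Δts, ∀ f, SmoothPeriodic f → ∀ q,
      |Real.exp (Δt * W q) * Q Δt f q - f q -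
          ∑ k ∈ Finset.Icc 1 (p + 1), Δt ^ k *
            ∑ j ∈ Finset.range (k + 1), W q ^ j / (Nat.factorial j) * A (k - j) f q|
        ≤ c' * Δt ^ (p + 2) * CmNorm m' f := by
  obtain ⟨c, hc, m, hR⟩ := hR
  obtain ⟨B₀, hB₀⟩ := aux_fp_bdd W hW
  have hA : ∀ k : ℕ, ∃ C : ℝ, 0 ≤ C ∧ ∃ n : ℕ, k ∈ Finset.range (p + 2) →
      ∀ f, SmoothPeriodic f → ∀ q, |A k f q| ≤ C * CmNorm n f := by
    intro k
    by_cases hk : k ∈ Finset.Icc 1 (p + 1)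
    · obtain ⟨C, hC, n, h⟩ := hAbdd k hk
      exact ⟨C, hC, n, fun _ => h⟩
    · refine ⟨1, zero_le_one, 0, fun hk2 f hf q => ?_⟩
      have : k = 0 := by simp at hk hk2; omega
      subst this
      rw [hA0, one_mul]
      exact aux_self f hf q
  choose C hC n hn using hA
  set B := max B₀ 1 with hBdef
  have hB1 : 1 ≤ B := le_max_right _ _
  have hB : ∀ q, |W q| ≤ B := fun q => (hB₀ q).trans (le_max_left _ _)
  set E := Real.exp (Δts * B) with hE
  have hE0 : 0 < E := Real.exp_pos _
  refine ⟨E * c + ∑ k ∈ Finset.range (p + 2), C k * (B ^ (p + 2) * E), ?_,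
    m + ∑ k ∈ Finset.range (p + 2), n k, ?_⟩
  · have : 0 ≤ ∑ k ∈ Finset.range (p + 2), C k * (B ^ (p + 2) * E) :=
      Finset.sum_nonneg fun k _ => mul_nonneg (hC k) (by positivity)
    positivity
  intro x hx f hf q
  set M := m + ∑ k ∈ Finset.range (p + 2), n k with hM
  have hx0 : 0 < x := hx.1
  have hN : 0 ≤ CmNorm M f := aux_nonneg _ _
  have hxw : |x * W q| ≤ Δts * B := by
    rw [abs_mul, abs_of_pos hx0]
    exact mul_le_mul hx.2 (hB q) (abs_nonneg _) hΔts.le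
  have hexp : Real.exp |x * W q| ≤ E := Real.exp_le_exp.mpr hxw
  have hexp' : Real.exp (x * W q) ≤ E := Real.exp_le_exp.mpr ((le_abs_self _).trans hxw)
  have h0 : f q = A 0 f q := by rw [hA0]; rfl
  have halg := aux_alg (p + 1) x (W q) (Q x f q) (fun k => A k f q)
  simp only [← h0] at halg
  rw [halg, add_mul, add_mul, Finset.sum_mul, Finset.sum_mul]
  refine (abs_add_le _ _).trans (add_le_add ?_ ?_)
  · rw [abs_mul, abs_of_pos (Real.exp_pos _)]
    calc _ ≤ E * (c * x ^ (p + 2) * CmNorm m f) :=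
          mul_le_mul hexp' (hR x hx f hf q) (abs_nonneg _) hE0.le
      _ ≤ E * (c * x ^ (p + 2) * CmNorm M f) := by
          have := aux_mono (Nat.le_add_right m _ : m ≤ M) f hf
          gcongr
      _ = _ := by ring
  · refine (Finset.abs_sum_le_sum_abs _ _).trans (Finset.sum_le_sum fun k hk => ?_)
    have hk' : k ≤ p + 2 := by simp at hk; omega
    have hnk : n k ≤ M :=
      (Finset.single_le_sum (f := n) (fun _ _ => Nat.zero_le _) hk).trans (Nat.le_add_left _ _)
    have h1 : |A k f q| ≤ C k * CmNorm M f :=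
      (hn k hk f hf q).trans (mul_le_mul_of_nonneg_left (aux_mono hnk f hf) (hC k))
    have h2 : |Real.exp (x * W q) - ∑ j ∈ Finset.range (p + 1 + 1 - k),
        (x * W q) ^ j / (Nat.factorial j)| ≤ x ^ (p + 2 - k) * (B ^ (p + 2) * E) := by
      refine (aux_exp _ _).trans ?_
      rw [abs_mul, abs_of_pos hx0, mul_pow, mul_assoc]
      rw [abs_mul, abs_of_pos hx0] at hexp
      have h3 : |W q| ^ (p + 1 + 1 - k) ≤ B ^ (p + 2) :=
        (pow_le_pow_left₀ (abs_nonneg _) (hB q) _).trans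
          (pow_le_pow_right₀ hB1 (by omega))
      gcongr
    rw [abs_mul, abs_mul, abs_of_pos (pow_pos hx0 k)]
    calc _ ≤ x ^ k * (C k * CmNorm M f) * (x ^ (p + 2 - k) * (B ^ (p + 2) * E)) := by
          have := mul_nonneg (hC k) hN
          gcongr
      _ = (x ^ k * x ^ (p + 2 - k)) * (C k * (B ^ (p + 2) * E) * CmNorm M f) := by ring
      _ = _ := by
          rw [← pow_add, Nat.add_sub_cancel' hk']; ring
end
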